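/- Let n ≥ 3 be an integer, let η > 0, let m ∈ (0,1), and let α, β be real numbers with α = 2β/(1−m). Let v be a radial solution of (E) on [0,∞). Then the function u : ℝⁿ × ℝ → ℝ defined by u(x,t) = e^{−αt}·v(|x|·e^{−βt}) is positive and satisfies ∂u/∂t = ((n−1)/m)·Δₓ(u^m) at every point of ℝⁿ × ℝ (an eternal solution), where Δₓ denotes the Laplacian in the space variables, i.e. the sum of the second partial derivatives with respect to the standard coordinates of ℝⁿ. -/

import Mathlib

open Real Set Filter

/-- `v` is a radial solution of the elliptic equation
`((n-1)/m)·((v^m)'' + ((n-1)/r)(v^m)') + α v + β r v' = 0` on `[0, ∞)`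
with `v > 0`, `v(0) = η`, `v'(0) = 0`. -/
def IsRadialSol (n : ℕ) (m α β η : ℝ) (v : ℝ → ℝ) : Prop :=
  (∀ r ∈ Set.Ici (0:ℝ), 0 < v r) ∧
  ContinuousOn v (Set.Ici (0:ℝ)) ∧
  ContDiffOn ℝ 2 v (Set.Ioi (0:ℝ)) ∧
  HasDerivWithinAt v 0 (Set.Ici (0:ℝ)) 0 ∧
  v 0 = η ∧
  ∀ r ∈ Set.Ioi (0:ℝ),
    (((n : ℝ) - 1) / m) * (deriv (deriv (fun s => v s ^ m)) r
      + (((n : ℝ) - 1) / r) * deriv (fun s => v s ^ m) r)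
    + α * v r + β * r * deriv v r = 0

/-- The Laplacian of `f : ℝⁿ → ℝ` at `x`: the sum of the second partial
derivatives of `f` with respect to the standard coordinates of `ℝⁿ`. -/
noncomputable def lap (n : ℕ) (f : EuclideanSpace ℝ (Fin n) → ℝ)
    (x : EuclideanSpace ℝ (Fin n)) : ℝ :=
  ∑ i : Fin n,
    iteratedDeriv 2 (fun s : ℝ => f (x + s • EuclideanSpace.single i (1:ℝ))) 0

/-!
In self-similar variables the equation is stationary: with `y = e^{-βt} x`, the relation
`α (1 - m) = 2 β` makes both sides of the fast diffusion equation carry the factor `e^{-αt}`, so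
the claim reduces to the elliptic equation `((n - 1) / m) Δ(v^m) = -(α v + β r v')`, `r = |y|`, on
`ℝⁿ`. Away from the origin this is the radial ODE. At the origin one needs `lim φ'(r) / r` for
`φ = ((n - 1) / m) v^m`, although `φ'` is not known to be continuous there. The ODE has the
conservation form `(r^(n-1) φ' + β r^n v)' = (n β - α) r^(n-1) v`, so the flux has a bounded
derivative near `0` and therefore a limit; this limit vanishes because the mean value theorem
provides points tending to `0` along which `φ' → 0`. L'Hôpital's rule for the flux over `r^n` then
gives the limit.
-/

open scoped Topology RealInnerProductSpace

section OneSidedLimits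

variable {f : ℝ → ℝ} {a d : ℝ}

theorem eventually_differentiableAt_of_contDiffOn_Ioi {k : WithTop ℕ∞}
    (hf : ContDiffOn ℝ k f (Ioi a)) (hk : k ≠ 0) : ∀ᶠ r in 𝓝[>] a, DifferentiableAt ℝ f r :=
  eventually_mem_nhdsWithin.mono fun _ hr ↦
    (hf.differentiableOn hk).differentiableAt (Ioi_mem_nhds hr)

theorem mapClusterPt_deriv_of_hasDerivWithinAt (hf : HasDerivWithinAt f d (Ici a) a)
    (hdiff : ∀ᶠ r in 𝓝[>] a, DifferentiableAt ℝ f r) : MapClusterPt d (𝓝[>] a) (deriv f) := by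
  obtain ⟨b, hab, hb⟩ := mem_nhdsGT_iff_exists_Ioo_subset.1 hdiff
  have hslope : Tendsto (slope f a) (𝓝[>] a) (𝓝 d) :=
    (hasDerivWithinAt_iff_tendsto_slope' (notMem_Ioi.2 le_rfl)).1 (hf.mono Ioi_subset_Ici_self)
  refine mapClusterPt_iff_frequently.2 fun s hs ↦ (nhdsGT_basis a).frequently_iff.2 fun c hac ↦ ?_
  obtain ⟨r, hrs, hr⟩ := ((hslope.eventually_mem hs).and
    (Ioo_mem_nhdsGT (lt_min (mem_Ioi.1 hab) hac))).exists
  have hrb : r < b := hr.2.trans_le (min_le_left b c)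
  have hcont : ContinuousOn f (Icc a r) := fun y hy ↦ by
    rcases hy.1.eq_or_lt with rfl | hay
    · exact hf.continuousWithinAt.mono Icc_subset_Ici_self
    · exact (hb ⟨hay, hy.2.trans_lt hrb⟩).continuousAt.continuousWithinAt
  obtain ⟨ξ, hξ, hξ'⟩ := exists_deriv_eq_slope f hr.1 hcont fun y hy ↦
    (hb ⟨hy.1, hy.2.trans hrb⟩).differentiableWithinAt
  refine ⟨ξ, ⟨hξ.1, hξ.2.trans (hr.2.trans_le (min_le_right b c))⟩, ?_⟩
  rwa [hξ', ← slope_def_field]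

theorem tendsto_nhdsGT_of_mapClusterPt_of_hasDerivAt {f' : ℝ → ℝ} {l C : ℝ}
    (hf : ∀ᶠ r in 𝓝[>] a, HasDerivAt f (f' r) r) (hf' : ∀ᶠ r in 𝓝[>] a, |f' r| ≤ C)
    (hl : MapClusterPt l (𝓝[>] a) f) : Tendsto f (𝓝[>] a) (𝓝 l) := by
  obtain ⟨b, hab, hb⟩ := mem_nhdsGT_iff_exists_Ioo_subset.1 (hf.and hf')
  have hlip : LipschitzOnWith C.toNNReal f (Ioo a b) :=
    (convex_Ioo a b).lipschitzOnWith_of_nnnorm_hasDerivWithin_le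
      (fun r hr ↦ (hb hr).1.hasDerivWithinAt)
      fun r hr ↦ NNReal.coe_le_coe.1 ((hb hr).2.trans C.le_coe_toNNReal)
  obtain ⟨g, hg, hfg⟩ := hlip.extend_real
  have hlim : Tendsto f (𝓝[>] a) (𝓝 (g a)) :=
    hg.continuous.continuousWithinAt.tendsto.congr'
      (hfg.symm.eventuallyEq_of_mem (Ioo_mem_nhdsGT hab))
  obtain ⟨U, hU, hUl⟩ := mapClusterPt_iff_ultrafilter.1 hl
  rwa [tendsto_nhds_unique hUl (hlim.mono_left hU)]

end OneSidedLimits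

section RadialODE

variable {N : ℕ} {a b : ℝ} {ψ v : ℝ → ℝ}

/-- The flux `r^N ψ - b r^(N+1) v` of the singular equation `ψ' + (N/r) ψ = a v + b r v'`: the
combination whose derivative no longer involves `v'`. -/
def radialFlux (N : ℕ) (b : ℝ) (ψ v : ℝ → ℝ) (r : ℝ) : ℝ :=
  r ^ N * ψ r - b * (r ^ (N + 1) * v r)

theorem hasDerivAt_radialFlux {r ψ' v' : ℝ} (hr : r ≠ 0) (hψ : HasDerivAt ψ ψ' r)
    (hv : HasDerivAt v v' r) (hode : ψ' + N / r * ψ r = a * v r + b * (r * v')) :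
    HasDerivAt (radialFlux N b ψ v) ((a - (N + 1) * b) * (r ^ N * v r)) r := by
  have hflux := ((hasDerivAt_pow N r).mul hψ).sub
    (((hasDerivAt_pow (N + 1) r).mul hv).const_mul b)
  refine hflux.congr_deriv ?_
  have hpow : (N : ℝ) * r ^ (N - 1) = r ^ N * (N / r) := by
    cases N with
    | zero => simp
    | succ k => simp only [Nat.add_sub_cancel, pow_succ]; field_simp
  rw [hpow, Nat.add_sub_cancel]
  push_cast
  linear_combination r ^ N * hode

variable {η : ℝ}

theorem tendsto_radialFlux_zero (hψ : ∀ᶠ r in 𝓝[>] 0, DifferentiableAt ℝ ψ r)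
    (hv : ∀ᶠ r in 𝓝[>] 0, DifferentiableAt ℝ v r) (hψ0 : MapClusterPt 0 (𝓝[>] 0) ψ)
    (hv0 : Tendsto v (𝓝[>] 0) (𝓝 η))
    (hode : ∀ᶠ r in 𝓝[>] 0, deriv ψ r + N / r * ψ r = a * v r + b * (r * deriv v r)) :
    Tendsto (radialFlux N b ψ v) (𝓝[>] 0) (𝓝 0) := by
  have hpow (k : ℕ) : Tendsto (fun r : ℝ ↦ r ^ k) (𝓝[>] 0) (𝓝 (0 ^ k)) :=
    (continuous_pow k).continuousWithinAt
  have hderiv : ∀ᶠ r in 𝓝[>] 0,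
      HasDerivAt (radialFlux N b ψ v) ((a - (N + 1) * b) * (r ^ N * v r)) r := by
    filter_upwards [hψ, hv, hode, self_mem_nhdsWithin] with r hψr hvr hr hpos
    exact hasDerivAt_radialFlux (ne_of_gt hpos) hψr.hasDerivAt hvr.hasDerivAt hr
  have hbound := (((hpow N).mul hv0).const_mul (a - (N + 1) * b)).abs.eventually_le_const
    (lt_add_one _)
  refine tendsto_nhdsGT_of_mapClusterPt_of_hasDerivAt hderiv hbound ?_
  obtain ⟨U, hU, hψU⟩ := mapClusterPt_iff_ultrafilter.1 hψ0
  refine mapClusterPt_iff_ultrafilter.2 ⟨U, hU, ?_⟩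
  unfold radialFlux
  simpa using (((hpow N).mono_left hU).mul hψU).sub
    ((((hpow (N + 1)).mul hv0).mono_left hU).const_mul b)

theorem tendsto_div_nhdsGT_zero_of_radial_ode (hψ : ∀ᶠ r in 𝓝[>] 0, DifferentiableAt ℝ ψ r)
    (hv : ∀ᶠ r in 𝓝[>] 0, DifferentiableAt ℝ v r) (hψ0 : MapClusterPt 0 (𝓝[>] 0) ψ)
    (hv0 : Tendsto v (𝓝[>] 0) (𝓝 η))
    (hode : ∀ᶠ r in 𝓝[>] 0, deriv ψ r + N / r * ψ r = a * v r + b * (r * deriv v r)) :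
    Tendsto (fun r ↦ ψ r / r) (𝓝[>] 0) (𝓝 (a * η / (N + 1))) := by
  have hN : (N + 1 : ℝ) ≠ 0 := by positivity
  have hflux : Tendsto (fun r ↦ radialFlux N b ψ v r / r ^ (N + 1)) (𝓝[>] 0)
      (𝓝 ((a - (N + 1) * b) / (N + 1) * η)) := by
    refine HasDerivAt.lhopital_zero_nhdsGT (f' := fun r ↦ (a - (N + 1) * b) * (r ^ N * v r))
      (g' := fun r ↦ (N + 1) * r ^ N) ?_ ?_ ?_
      (tendsto_radialFlux_zero hψ hv hψ0 hv0 hode) ?_ ?_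
    · filter_upwards [hψ, hv, hode, self_mem_nhdsWithin] with r hψr hvr hr hpos
      exact hasDerivAt_radialFlux (ne_of_gt hpos) hψr.hasDerivAt hvr.hasDerivAt hr
    · exact Eventually.of_forall fun r ↦ by simpa using hasDerivAt_pow (N + 1) r
    · filter_upwards [self_mem_nhdsWithin] with r (hr : 0 < r)
      positivity
    · exact Tendsto.mono_left ((continuous_pow (N + 1)).tendsto' 0 0 (by simp)) nhdsWithin_le_nhds
    · refine (hv0.const_mul _).congr' ?_
      filter_upwards [self_mem_nhdsWithin] with r (hr : 0 < r)
      field_simp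
  have hlim : (a - (N + 1) * b) / (N + 1) * η + b * η = a * η / (N + 1) := by
    field_simp
    ring
  refine hlim ▸ (hflux.add (hv0.const_mul b)).congr' ?_
  filter_upwards [self_mem_nhdsWithin] with r (hr : 0 < r)
  simp only [radialFlux, pow_succ]
  field_simp
  ring

end RadialODE

section NormAlongLines

variable {E : Type*} [NormedAddCommGroup E] [InnerProductSpace ℝ E] {x : E} {φ : ℝ → ℝ}

theorem hasDerivAt_norm_add_smul (e : E) {s : ℝ} (h : x + s • e ≠ 0) :
    HasDerivAt (fun s : ℝ ↦ ‖x + s • e‖) (⟪x + s • e, e⟫ / ‖x + s • e‖) s := by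
  have hline : HasDerivAt (fun s : ℝ ↦ x + s • e) e s := by
    simpa using ((hasDerivAt_id s).smul_const e).const_add x
  have hsqrt := hline.norm_sq.sqrt (pow_ne_zero 2 (norm_ne_zero_iff.2 h))
  simpa only [Real.sqrt_sq (norm_nonneg _), mul_div_mul_left _ _ (two_ne_zero' ℝ)] using hsqrt

theorem iteratedDeriv_two_norm_add_smul (hx : x ≠ 0) (e : E) :
    iteratedDeriv 2 (fun s : ℝ ↦ ‖x + s • e‖) 0 = ‖e‖ ^ 2 / ‖x‖ - ⟪x, e⟫ ^ 2 / ‖x‖ ^ 3 := by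
  have hx' : ‖x‖ ≠ 0 := norm_ne_zero_iff.2 hx
  have hx0 : x + (0 : ℝ) • e ≠ 0 := by simpa using hx
  have hne : ∀ᶠ s in 𝓝 (0 : ℝ), x + s • e ≠ 0 :=
    (show Continuous fun s : ℝ ↦ x + s • e by fun_prop).continuousAt.eventually_ne hx0
  have hderiv : deriv (fun s : ℝ ↦ ‖x + s • e‖) =ᶠ[𝓝 0]
      fun s ↦ (⟪x, e⟫ + s * ‖e‖ ^ 2) / ‖x + s • e‖ := by
    filter_upwards [hne] with s hs
    rw [(hasDerivAt_norm_add_smul e hs).deriv, inner_add_left, real_inner_smul_left,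
      real_inner_self_eq_norm_sq]
  have hnum : HasDerivAt (fun s : ℝ ↦ ⟪x, e⟫ + s * ‖e‖ ^ 2) (‖e‖ ^ 2) 0 := by
    simpa using ((hasDerivAt_id (0 : ℝ)).mul_const (‖e‖ ^ 2)).const_add ⟪x, e⟫
  have hquot := (hnum.fun_div (hasDerivAt_norm_add_smul e hx0) (norm_ne_zero_iff.2 hx0)).deriv
  rw [iteratedDeriv_succ, iteratedDeriv_one, hderiv.deriv_eq, hquot]
  simp only [zero_smul, add_zero, zero_mul]
  field_simp

theorem iteratedDeriv_two_comp_norm_add_smul (hx : x ≠ 0) (hφ : ContDiffAt ℝ 2 φ ‖x‖) (e : E) :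
    iteratedDeriv 2 (fun s : ℝ ↦ φ ‖x + s • e‖) 0 =
      deriv (deriv φ) ‖x‖ * (⟪x, e⟫ / ‖x‖) ^ 2 +
        deriv φ ‖x‖ * (‖e‖ ^ 2 / ‖x‖ - ⟪x, e⟫ ^ 2 / ‖x‖ ^ 3) := by
  have hx0 : x + (0 : ℝ) • e ≠ 0 := by simpa using hx
  have hnorm : ContDiffAt ℝ 2 (fun s : ℝ ↦ ‖x + s • e‖) 0 :=
    ContDiffAt.norm ℝ (by fun_prop) hx0
  have hcomp := iteratedDeriv_comp_two (f := fun s : ℝ ↦ ‖x + s • e‖) (x := 0) (g := φ)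
    (by simpa using hφ) hnorm
  have hφ2 : iteratedDeriv 2 φ = deriv (deriv φ) := by rw [iteratedDeriv_succ, iteratedDeriv_one]
  rw [iteratedDeriv_two_norm_add_smul hx, (hasDerivAt_norm_add_smul e hx0).deriv, hφ2] at hcomp
  simpa only [Function.comp_def, zero_smul, add_zero] using hcomp

theorem iteratedDeriv_two_comp_abs {L : ℝ} (hφ : ∀ᶠ r in 𝓝[>] 0, DifferentiableAt ℝ φ r)
    (hL : Tendsto (fun r ↦ deriv φ r / r) (𝓝[>] 0) (𝓝 L)) :
    iteratedDeriv 2 (fun s : ℝ ↦ φ |s|) 0 = L := by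
  have heven : deriv (fun s : ℝ ↦ φ |s|) 0 = 0 := by
    have h := deriv_comp_neg (fun s : ℝ ↦ φ |s|) 0
    simp only [abs_neg, neg_zero] at h
    linarith
  have habs : Tendsto (fun s : ℝ ↦ |s|) (𝓝[≠] 0) (𝓝[>] 0) :=
    tendsto_nhdsWithin_iff.2
      ⟨(continuous_abs.tendsto' 0 0 abs_zero).mono_left nhdsWithin_le_nhds,
        eventually_mem_nhdsWithin.mono fun s hs ↦ abs_pos.2 hs⟩
  rw [iteratedDeriv_succ, iteratedDeriv_one]
  refine (hasDerivAt_iff_tendsto_slope.2 ((hL.comp habs).congr' ?_)).deriv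
  filter_upwards [habs.eventually hφ, self_mem_nhdsWithin] with s hs hs0
  have hderiv : deriv (fun s : ℝ ↦ φ |s|) s = deriv φ |s| * SignType.sign s :=
    (hs.hasDerivAt.comp s (hasDerivAt_abs hs0)).deriv
  rw [slope_def_field, heven, sub_zero, sub_zero, hderiv, Function.comp_apply]
  rcases lt_or_gt_of_ne hs0 with h | h
  · simp [sign_neg h, abs_of_neg h, div_neg, neg_div]
  · simp [sign_pos h, abs_of_pos h]

end NormAlongLines

section Laplacian

variable {n : ℕ}

theorem lap_const_mul (c : ℝ) (f : EuclideanSpace ℝ (Fin n) → ℝ) (x : EuclideanSpace ℝ (Fin n)) :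
    lap n (fun y ↦ c * f y) x = c * lap n f x := by
  simp only [lap, iteratedDeriv_const_mul_field, Finset.mul_sum]

theorem lap_comp_smul (b : ℝ) (f : EuclideanSpace ℝ (Fin n) → ℝ)
    (x : EuclideanSpace ℝ (Fin n)) :
    lap n (fun y ↦ f (b • y)) x = b ^ 2 * lap n f (b • x) := by
  have hline (e : EuclideanSpace ℝ (Fin n)) :
      iteratedDeriv 2 (fun s : ℝ ↦ f (b • (x + s • e))) 0 =
        b ^ 2 * iteratedDeriv 2 (fun s : ℝ ↦ f (b • x + s • e)) 0 := by
    have hderiv (s : ℝ) : deriv (fun s : ℝ ↦ f (b • (x + s • e))) s =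
        b * deriv (fun s : ℝ ↦ f (b • x + s • e)) (b * s) := by
      simp only [smul_add, smul_smul]
      exact deriv_comp_mul_left b (fun s ↦ f (b • x + s • e)) s
    simp only [iteratedDeriv_succ, iteratedDeriv_zero, funext hderiv, deriv_const_mul_field']
    simp [deriv_comp_mul_left b (deriv fun s : ℝ ↦ f (b • x + s • e)), pow_two, mul_assoc]
  simp only [lap, hline, Finset.mul_sum]

variable {φ : ℝ → ℝ}

theorem lap_comp_norm_of_ne_zero {x : EuclideanSpace ℝ (Fin n)} (hx : x ≠ 0)
    (hφ : ContDiffAt ℝ 2 φ ‖x‖) :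
    lap n (fun y ↦ φ ‖y‖) x = deriv (deriv φ) ‖x‖ + ((n : ℝ) - 1) / ‖x‖ * deriv φ ‖x‖ := by
  have hx' : ‖x‖ ≠ 0 := norm_ne_zero_iff.2 hx
  simp only [lap, iteratedDeriv_two_comp_norm_add_smul hx hφ, EuclideanSpace.inner_single_right,
    PiLp.norm_single, div_pow, one_mul, norm_one, one_pow, conj_trivial]
  rw [Finset.sum_add_distrib, ← Finset.mul_sum, ← Finset.mul_sum, Finset.sum_sub_distrib,
    Finset.sum_const, Finset.card_univ, Fintype.card_fin, nsmul_eq_mul, ← Finset.sum_div,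
    ← Finset.sum_div, ← EuclideanSpace.real_norm_sq_eq]
  field_simp

theorem lap_comp_norm_zero {L : ℝ} (hφ : ∀ᶠ r in 𝓝[>] 0, DifferentiableAt ℝ φ r)
    (hL : Tendsto (fun r ↦ deriv φ r / r) (𝓝[>] 0) (𝓝 L)) :
    lap n (fun y ↦ φ ‖y‖) 0 = n * L := by
  simp [lap, norm_smul, iteratedDeriv_two_comp_abs hφ hL]

end Laplacian

namespace IsRadialSol

variable {n : ℕ} {m α β η : ℝ} {v : ℝ → ℝ}

theorem pos (hv : IsRadialSol n m α β η v) {r : ℝ} (hr : 0 ≤ r) : 0 < v r :=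
  hv.1 r hr

theorem contDiffOn (hv : IsRadialSol n m α β η v) : ContDiffOn ℝ 2 v (Ioi 0) :=
  hv.2.2.1

theorem differentiableAt (hv : IsRadialSol n m α β η v) {r : ℝ} (hr : 0 < r) :
    DifferentiableAt ℝ v r :=
  (hv.contDiffOn.differentiableOn two_ne_zero).differentiableAt (Ioi_mem_nhds hr)

theorem hasDerivWithinAt_zero (hv : IsRadialSol n m α β η v) :
    HasDerivWithinAt v 0 (Ici 0) 0 :=
  hv.2.2.2.1

theorem tendsto_nhdsGT_zero (hv : IsRadialSol n m α β η v) : Tendsto v (𝓝[>] 0) (𝓝 (v 0)) :=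
  hv.hasDerivWithinAt_zero.continuousWithinAt.mono Ioi_subset_Ici_self

theorem contDiffOn_const_mul_rpow (hv : IsRadialSol n m α β η v) (c : ℝ) :
    ContDiffOn ℝ 2 (fun r ↦ c * v r ^ m) (Ioi 0) :=
  contDiffOn_const.mul <| hv.contDiffOn.rpow_const_of_ne fun _ hr ↦ (hv.pos (le_of_lt hr)).ne'

theorem hasDerivWithinAt_const_mul_rpow_zero (hv : IsRadialSol n m α β η v) (c : ℝ) :
    HasDerivWithinAt (fun r ↦ c * v r ^ m) 0 (Ici 0) 0 := by
  simpa using (hv.hasDerivWithinAt_zero.rpow_const (p := m)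
    (Or.inl (hv.pos le_rfl).ne')).const_mul c

theorem radial_ode (hv : IsRadialSol n m α β η v) {r : ℝ} (hr : 0 < r) :
    deriv (deriv fun s ↦ ((n : ℝ) - 1) / m * v s ^ m) r +
      ((n : ℝ) - 1) / r * deriv (fun s ↦ ((n : ℝ) - 1) / m * v s ^ m) r =
        -(α * v r + β * (r * deriv v r)) := by
  simp only [deriv_const_mul_field']
  linear_combination hv.2.2.2.2.2 r hr

theorem tendsto_deriv_const_mul_rpow_div (hv : IsRadialSol n m α β η v) (hn : n ≠ 0) :
    Tendsto (fun r ↦ deriv (fun s ↦ ((n : ℝ) - 1) / m * v s ^ m) r / r) (𝓝[>] 0)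
      (𝓝 (-α * v 0 / n)) := by
  set φ : ℝ → ℝ := fun s ↦ ((n : ℝ) - 1) / m * v s ^ m
  have hφ : ContDiffOn ℝ 2 φ (Ioi 0) := hv.contDiffOn_const_mul_rpow _
  have hφ' : ContDiffOn ℝ 1 (deriv φ) (Ioi 0) := hφ.deriv_of_isOpen isOpen_Ioi (by norm_num)
  have hcluster : MapClusterPt 0 (𝓝[>] 0) (deriv φ) :=
    mapClusterPt_deriv_of_hasDerivWithinAt (hv.hasDerivWithinAt_const_mul_rpow_zero _)
      (eventually_differentiableAt_of_contDiffOn_Ioi hφ two_ne_zero)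
  have hn' : ((n - 1 : ℕ) : ℝ) = n - 1 := Nat.cast_pred (Nat.pos_of_ne_zero hn)
  have hode : ∀ᶠ r in 𝓝[>] 0, deriv (deriv φ) r + (n - 1 : ℕ) / r * deriv φ r =
      -α * v r + -β * (r * deriv v r) := by
    filter_upwards [self_mem_nhdsWithin] with r hr
    rw [hn']
    linear_combination hv.radial_ode hr
  simpa only [hn', sub_add_cancel] using tendsto_div_nhdsGT_zero_of_radial_ode
    (eventually_differentiableAt_of_contDiffOn_Ioi hφ' one_ne_zero)
    (eventually_differentiableAt_of_contDiffOn_Ioi hv.contDiffOn two_ne_zero)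
    hcluster hv.tendsto_nhdsGT_zero hode

theorem lap_rpow_norm (hv : IsRadialSol n m α β η v) (hn : n ≠ 0)
    (x : EuclideanSpace ℝ (Fin n)) :
    ((n : ℝ) - 1) / m * lap n (fun y ↦ v ‖y‖ ^ m) x =
      -(α * v ‖x‖ + β * (‖x‖ * deriv v ‖x‖)) := by
  have hφ := hv.contDiffOn_const_mul_rpow (((n : ℝ) - 1) / m)
  rw [← lap_const_mul]
  rcases eq_or_ne x 0 with rfl | hx
  · rw [lap_comp_norm_zero (eventually_differentiableAt_of_contDiffOn_Ioi hφ two_ne_zero)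
      (hv.tendsto_deriv_const_mul_rpow_div hn), norm_zero]
    field_simp
    ring
  · have hx' : 0 < ‖x‖ := norm_pos_iff.2 hx
    rw [lap_comp_norm_of_ne_zero hx (hφ.contDiffAt (Ioi_mem_nhds hx')), hv.radial_ode hx']

end IsRadialSol

section SelfSimilar

variable {v : ℝ → ℝ} {α β m : ℝ}

theorem hasDerivAt_exp_mul_comp_mul_exp {ρ t : ℝ}
    (hv : ρ ≠ 0 → DifferentiableAt ℝ v (ρ * rexp (-β * t))) :
    HasDerivAt (fun τ ↦ rexp (-α * τ) * v (ρ * rexp (-β * τ)))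
      (-rexp (-α * t) * (α * v (ρ * rexp (-β * t)) +
        β * (ρ * rexp (-β * t) * deriv v (ρ * rexp (-β * t))))) t := by
  have hexp (c : ℝ) : HasDerivAt (fun τ ↦ rexp (-c * τ)) (rexp (-c * t) * -c) t := by
    simpa using ((hasDerivAt_id t).const_mul (-c)).exp
  have hprofile : HasDerivAt (fun τ ↦ v (ρ * rexp (-β * τ)))
      (deriv v (ρ * rexp (-β * t)) * (ρ * (rexp (-β * t) * -β))) t := by
    rcases eq_or_ne ρ 0 with rfl | hρ
    · simpa using hasDerivAt_const t (v 0)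
    · exact (hv hρ).hasDerivAt.comp t ((hexp β).const_mul ρ)
  refine ((hexp α).mul hprofile).congr_deriv ?_
  ring

theorem lap_rpow_const_mul_comp_norm_mul {n : ℕ} {A b : ℝ} (hA : 0 ≤ A) (hb : 0 ≤ b)
    (hv : ∀ r, 0 ≤ r → 0 ≤ v r) (x : EuclideanSpace ℝ (Fin n)) :
    lap n (fun y ↦ (A * v (‖y‖ * b)) ^ m) x =
      A ^ m * b ^ 2 * lap n (fun y ↦ v ‖y‖ ^ m) (b • x) := by
  have hscale (y : EuclideanSpace ℝ (Fin n)) :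
      (A * v (‖y‖ * b)) ^ m = A ^ m * v ‖b • y‖ ^ m := by
    rw [norm_smul_of_nonneg hb, mul_comm b, Real.mul_rpow hA (hv _ (by positivity))]
  simp only [hscale]
  rw [lap_const_mul, lap_comp_smul b fun y ↦ v ‖y‖ ^ m, mul_assoc]

theorem exp_rpow_mul_exp_sq (h : α * (1 - m) = 2 * β) (t : ℝ) :
    rexp (-α * t) ^ m * rexp (-β * t) ^ 2 = rexp (-α * t) := by
  rw [← Real.exp_mul, ← Real.exp_nat_mul, ← Real.exp_add]
  congr 1
  push_cast
  linear_combination t * h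

end SelfSimilar

theorem stmt11_general (n : ℕ) (hn : n ≠ 0) (m α β η : ℝ) (_hm : m ≠ 0)
    (hα : α * (1 - m) = 2 * β) (v : ℝ → ℝ) (hv : IsRadialSol n m α β η v)
    (u : EuclideanSpace ℝ (Fin n) → ℝ → ℝ)
    (hu : ∀ (x : EuclideanSpace ℝ (Fin n)) (t : ℝ),
      u x t = Real.exp (-α * t) * v (‖x‖ * Real.exp (-β * t)))
    (x : EuclideanSpace ℝ (Fin n)) (t : ℝ) :
    0 < u x t ∧
      HasDerivAt (fun τ : ℝ ↦ u x τ)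
        ((((n : ℝ) - 1) / m) * lap n (fun y ↦ u y t ^ m) x) t := by
  have hpos (r : ℝ) (hr : 0 ≤ r) : 0 < v r := hv.pos hr
  simp only [hu]
  refine ⟨mul_pos (exp_pos _) (hpos _ (by positivity)), ?_⟩
  have htime := hasDerivAt_exp_mul_comp_mul_exp (α := α) (β := β) (ρ := ‖x‖) (t := t)
    fun hx ↦ hv.differentiableAt (by positivity)
  refine htime.congr_deriv ?_
  have hspace := hv.lap_rpow_norm hn (rexp (-β * t) • x)
  rw [norm_smul_of_nonneg (exp_pos _).le, mul_comm (rexp (-β * t))] at hspace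
  rw [lap_rpow_const_mul_comp_norm_mul (exp_pos _).le (exp_pos _).le fun r hr ↦ (hpos r hr).le,
    exp_rpow_mul_exp_sq hα]
  linear_combination -rexp (-α * t) * hspace

theorem stmt11 (n : ℕ) (hn : 3 ≤ n) (m α β η : ℝ) (hη : 0 < η)
    (hm : 0 < m) (hm1 : m < 1) (hα : α = 2 * β / (1 - m))
    (v : ℝ → ℝ) (hv : IsRadialSol n m α β η v)
    (u : EuclideanSpace ℝ (Fin n) → ℝ → ℝ)
    (hu : ∀ (x : EuclideanSpace ℝ (Fin n)) (t : ℝ),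
      u x t = Real.exp (-α * t) * v (‖x‖ * Real.exp (-β * t))) :
    ∀ (x : EuclideanSpace ℝ (Fin n)) (t : ℝ),
      0 < u x t ∧
      deriv (fun τ : ℝ => u x τ) t
        = (((n : ℝ) - 1) / m) * lap n (fun y => u y t ^ m) x := by
  have hα' : α * (1 - m) = 2 * β := by rw [hα, div_mul_cancel₀ _ (sub_pos.2 hm1).ne']
  exact fun x t ↦
    (stmt11_general n (by lia) m α β η hm.ne' hα' v hv u hu x t).imp_right HasDerivAt.deriv
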